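/- Let E be a real vector bundle of rank 3 over the sphere Sⁿ with n ≥ 3. If E admits a nowhere-zero section, then E is trivial. -/

import Mathlib

open Bundle

/-- Every nowhere-zero continuous complex-valued function on `K` has a continuous logarithm. -/
def HasContinuousLog {X : Type*} [TopologicalSpace X] (K : Set X) : Prop :=
  ∀ f : X → ℂ, ContinuousOn f K → (∀ x ∈ K, f x ≠ 0) →
    ∃ g : X → ℂ, ContinuousOn g K ∧ ∀ x ∈ K, Complex.exp (g x) = f x

namespace HasContinuousLog

variable {X Y : Type*} [TopologicalSpace X] [TopologicalSpace Y]

theorem of_rightInverse {K : Set X} {L : Set Y} (hK : HasContinuousLog K) {φ : X → Y} {ψ : Y → X}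
    (hφ : ContinuousOn φ K) (hφm : Set.MapsTo φ K L) (hψ : ContinuousOn ψ L)
    (hψm : Set.MapsTo ψ L K) (h : ∀ y ∈ L, φ (ψ y) = y) : HasContinuousLog L := by
  intro f hf hf0
  obtain ⟨g, hg, hgf⟩ := hK (f ∘ φ) (hf.comp hφ hφm) fun x hx => hf0 _ (hφm hx)
  refine ⟨g ∘ ψ, hg.comp hψ hψm, fun y hy => ?_⟩
  simp only [Function.comp_apply, hgf _ (hψm hy), h y hy]

theorem of_convex {V : Type*} [NormedAddCommGroup V] [NormedSpace ℝ V] {K : Set V}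
    (hK : Convex ℝ K) : HasContinuousLog K := by
  classical
  intro f hf hf0
  rcases K.eq_empty_or_nonempty with rfl | ⟨p, hp⟩
  · exact ⟨0, by simp, by simp⟩
  have hmem : ∀ q : unitInterval × K, AffineMap.lineMap p (q.2 : V) (q.1 : ℝ) ∈ K := fun q =>
    hK.lineMap_mem hp q.2.2 q.1.2
  let H : C(unitInterval × K, {z : ℂ // z ≠ 0}) :=
    ⟨fun q => ⟨f (AffineMap.lineMap p (q.2 : V) (q.1 : ℝ)), hf0 _ (hmem q)⟩, by
      refine Continuous.subtype_mk (hf.comp_continuous ?_ hmem) _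
      simp only [AffineMap.lineMap_apply]
      fun_prop⟩
  have h0 : ∀ a : K, H (0, a) =
      ⟨_, Complex.exp_ne_zero ((ContinuousMap.const K (Complex.log (f p))) a)⟩ := by
    intro a
    apply Subtype.ext
    simp [H, Complex.exp_log (hf0 p hp)]
  let G := Complex.isCoveringMap_exp.liftHomotopy H (ContinuousMap.const K (Complex.log (f p))) h0
  have hG : ∀ q, Complex.exp (G q) = H q := fun q =>
    congrArg Subtype.val (congrFun (Complex.isCoveringMap_exp.liftHomotopy_lifts H _ h0) q)
  refine ⟨fun x => if hx : x ∈ K then G (1, ⟨x, hx⟩) else 0, ?_, fun x hx => ?_⟩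
  · rw [continuousOn_iff_continuous_domRestrict]
    have : K.domRestrict (fun x => if hx : x ∈ K then G (1, ⟨x, hx⟩) else 0) =
        fun x => G (1, x) := by
      ext x
      simp [Set.domRestrict]
    rw [this]
    fun_prop
  · simp [hx, hG, H]

theorem union {A C : Set X} (hA : HasContinuousLog A) (hC : HasContinuousLog C)
    (hAc : IsClosed A) (hCc : IsClosed C) (hAC : IsPreconnected (A ∩ C)) :
    HasContinuousLog (A ∪ C) := by
  classical
  intro f hf hf0
  obtain ⟨g, hg, hgf⟩ := hA f (hf.mono Set.subset_union_left) fun x hx => hf0 x (Or.inl hx)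
  obtain ⟨k, hk, hkf⟩ := hC f (hf.mono Set.subset_union_right) fun x hx => hf0 x (Or.inr hx)
  obtain ⟨c, hc, hgk⟩ : ∃ c : ℂ, Complex.exp c = 1 ∧ ∀ x ∈ A ∩ C, g x = k x + c := by
    rcases (A ∩ C).eq_empty_or_nonempty with he | ⟨x₀, hx₀⟩
    · exact ⟨0, by simp, by simp [he]⟩
    · have hc : Complex.exp (g x₀ - k x₀) = 1 := by
        rw [Complex.exp_sub, hgf _ hx₀.1, hkf _ hx₀.2, div_self (hf0 _ (Or.inl hx₀.1))]
      refine ⟨g x₀ - k x₀, hc, ?_⟩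
      refine Complex.isCoveringMap_exp.eqOn_of_comp_eqOn hAC (hg.mono Set.inter_subset_left)
        ((hk.mono Set.inter_subset_right).add continuousOn_const) (fun x hx => ?_) hx₀ (by ring)
      apply Subtype.ext
      simp [Complex.exp_add, hc, hgf _ hx.1, hkf _ hx.2]
  refine ⟨fun x => if x ∈ A then g x else k x + c, ContinuousOn.union_of_isClosed ?_ ?_ hAc hCc, ?_⟩
  · exact hg.congr fun x hx => if_pos hx
  · refine (hk.add (continuousOn_const (c := c))).congr fun x hx => ?_
    by_cases hxA : x ∈ A
    · simp [hxA, hgk x ⟨hxA, hx⟩]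
    · simp [hxA]
  · intro x hx
    by_cases hxA : x ∈ A
    · simp [hxA, hgf]
    · simp [hxA, Complex.exp_add, hc, hkf x (hx.resolve_left hxA)]

end HasContinuousLog

/-- A property of subsets that holds locally on a compact convex set `D` and is inherited by unions
of two closed convex sets holds for `D`. -/
theorem Convex.induction_on_slabs {ι : Type*} [Fintype ι] {D : Set (ι → ℝ)} (hDn : D.Nonempty)
    (hDc : IsCompact D) (hD : Convex ℝ D) (R : Set (ι → ℝ) → Prop)
    (hloc : ∀ x ∈ D, ∃ U ∈ nhds x, ∀ C ⊆ U ∩ D, R C)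
    (hunion : ∀ C₁ C₂, C₁ ⊆ D → C₂ ⊆ D → IsClosed C₁ → IsClosed C₂ → Convex ℝ C₁ → Convex ℝ C₂ →
      R C₁ → R C₂ → R (C₁ ∪ C₂)) : R D := by
  classical
  choose! U hU hUR using hloc
  obtain ⟨δ, hδ, hball⟩ : ∃ δ > (0 : ℝ), ∀ x ∈ D, ∃ y ∈ D, Metric.ball x δ ⊆ U y := by
    obtain ⟨δ, hδ, h⟩ := lebesgue_number_lemma_of_metric (c := fun y : D => interior (U y)) hDc
      (fun _ => isOpen_interior)
      (fun x hx => Set.mem_iUnion.2 ⟨⟨x, hx⟩, mem_interior_iff_mem_nhds.2 (hU x hx)⟩)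
    refine ⟨δ, hδ, fun x hx => ?_⟩
    obtain ⟨y, hy⟩ := h x hx
    exact ⟨y, y.2, hy.trans interior_subset⟩
  have hbox : ∀ a b : ι → ℝ, IsClosed (D ∩ Set.Icc a b) ∧ Convex ℝ (D ∩ Set.Icc a b) := fun a b =>
    ⟨hDc.isClosed.inter isClosed_Icc, hD.inter (convex_Icc a b)⟩
  have key : ∀ (T : Finset ι) (a b : ι → ℝ), (∀ i ∉ T, b i - a i < δ) → R (D ∩ Set.Icc a b) := by
    intro T
    induction T using Finset.induction_on with
    | empty =>
      intro a b hab
      rcases (D ∩ Set.Icc a b).eq_empty_or_nonempty with he | ⟨x, hx⟩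
      · obtain ⟨x, hx⟩ := hDn
        rw [he]
        exact hUR x hx ∅ (Set.empty_subset _)
      · obtain ⟨y, hy, hxy⟩ := hball x hx.1
        refine hUR y hy _ fun z hz => ⟨hxy ?_, hz.1⟩
        rw [Metric.mem_ball, dist_pi_lt_iff hδ]
        intro i
        have h₁ := hab i (by simp)
        have h₂ := hx.2.1 i
        have h₃ := hx.2.2 i
        have h₄ := hz.2.1 i
        have h₅ := hz.2.2 i
        rw [Real.dist_eq, abs_lt]
        constructor <;> linarith
    | insert j T hj ih =>
      have step : ∀ (N : ℕ) (a b : ι → ℝ), (∀ i ∉ insert j T, b i - a i < δ) →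
          b j - a j < δ + N * (δ / 2) → R (D ∩ Set.Icc a b) := by
        intro N
        induction N with
        | zero =>
          intro a b hab hj'
          refine ih a b fun i hi => ?_
          by_cases hij : i = j
          · subst hij; simpa using hj'
          · exact hab i (by simp [hij, hi])
        | succ N ihN =>
          intro a b hab hj'
          by_cases hsmall : b j - δ / 2 < a j
          · refine ihN a b hab ?_
            have : (0 : ℝ) ≤ N * (δ / 2) := by positivity
            linarith
          · have hsplit : D ∩ Set.Icc a b = (D ∩ Set.Icc a (Function.update b j (b j - δ / 2))) ∪
                (D ∩ Set.Icc (Function.update a j (b j - δ / 2)) b) := by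
              rw [← Set.inter_union_distrib_left]
              congr 1
              ext x
              simp only [Set.mem_union, Set.mem_Icc, le_update_iff, update_le_iff]
              constructor
              · rintro ⟨h₁, h₂⟩
                rcases le_total (x j) (b j - δ / 2) with h | h
                · exact Or.inl ⟨h₁, h, fun i _ => h₂ i⟩
                · exact Or.inr ⟨⟨h, fun i _ => h₁ i⟩, h₂⟩
              · rintro (⟨h₁, h, h₂⟩ | ⟨⟨h, h₁⟩, h₂⟩)
                · refine ⟨h₁, fun i => ?_⟩
                  by_cases hij : i = j
                  · subst hij; linarith
                  · exact h₂ i hij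
                · refine ⟨fun i => ?_, h₂⟩
                  by_cases hij : i = j
                  · subst hij; linarith
                  · exact h₁ i hij
            rw [hsplit]
            refine hunion _ _ Set.inter_subset_left Set.inter_subset_left (hbox _ _).1 (hbox _ _).1
              (hbox _ _).2 (hbox _ _).2 (ihN _ _ (fun i hi => ?_) ?_) (ih _ _ fun i hi => ?_)
            · have hij : i ≠ j := by rintro rfl; simp at hi
              simpa [hij] using hab i hi
            · push_cast at hj'
              simp only [Function.update_self]
              linarith
            · by_cases hij : i = j
              · subst hij
                simp only [Function.update_self]
                linarith
              · simpa [hij] using hab i (by simp [hij, hi])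
      intro a b hab
      obtain ⟨N, hN⟩ := exists_nat_gt ((b j - a j) / (δ / 2))
      refine step N a b hab ?_
      rw [div_lt_iff₀ (by positivity)] at hN
      linarith
  obtain ⟨r, hr⟩ := hDc.isBounded.exists_norm_le
  have h := key Finset.univ (fun _ => -r) (fun _ => r) (by simp)
  have hsub : D ⊆ Set.Icc (fun _ => -r) (fun _ => r) := fun x hx =>
    ⟨fun i => (abs_le.1 ((norm_le_pi_norm x i).trans (hr x hx))).1,
      fun i => (abs_le.1 ((norm_le_pi_norm x i).trans (hr x hx))).2⟩
  rwa [Set.inter_eq_left.2 hsub] at h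

/-- `H` is the image of a nonempty compact convex set of some `ℝⁿ` under a continuous map with
continuous inverse. -/
def IsConvexCell {X : Type*} [TopologicalSpace X] (H : Set X) : Prop :=
  ∃ (n : ℕ) (D : Set (Fin n → ℝ)) (φ : (Fin n → ℝ) → X) (ψ : X → Fin n → ℝ),
    D.Nonempty ∧ IsCompact D ∧ Convex ℝ D ∧ ContinuousOn φ D ∧ ContinuousOn ψ H ∧
      Set.LeftInvOn ψ φ D ∧ φ '' D = H

namespace IsConvexCell

variable {X Y : Type*} [TopologicalSpace X] [TopologicalSpace Y]

theorem hasContinuousLog {H : Set X} (h : IsConvexCell H) : HasContinuousLog H := by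
  obtain ⟨n, D, φ, ψ, -, -, hD, hφ, hψ, hinv, rfl⟩ := h
  refine (HasContinuousLog.of_convex hD).of_rightInverse hφ (Set.mapsTo_image _ _) hψ ?_ ?_
  · rintro _ ⟨x, hx, rfl⟩
    rwa [hinv hx]
  · rintro _ ⟨x, hx, rfl⟩
    rw [hinv hx]

theorem isCompact {H : Set X} (h : IsConvexCell H) : IsCompact H := by
  obtain ⟨n, D, φ, ψ, -, hDc, -, hφ, -, -, rfl⟩ := h
  exact hDc.image_of_continuousOn hφ

theorem image {H : Set X} (h : IsConvexCell H) {j : X → Y} {k : Y → X} (hj : ContinuousOn j H)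
    (hk : ContinuousOn k (j '' H)) (hkj : Set.LeftInvOn k j H) : IsConvexCell (j '' H) := by
  obtain ⟨n, D, φ, ψ, hne, hDc, hD, hφ, hψ, hinv, rfl⟩ := h
  refine ⟨n, D, j ∘ φ, ψ ∘ k, hne, hDc, hD, hj.comp hφ (Set.mapsTo_image _ _),
    hψ.comp hk ?_, ?_, Set.image_comp _ _ _⟩
  · rintro _ ⟨x, hx, rfl⟩
    rwa [hkj hx]
  · intro x hx
    simp only [Function.comp_apply, hkj (Set.mem_image_of_mem φ hx), hinv hx]

end IsConvexCell

section Sphere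

variable {W : Type*} [NormedAddCommGroup W] [InnerProductSpace ℝ W]

/-- The closed hemisphere of the unit sphere centred at `v`. -/
def closedHemisphere (v : W) : Set W := {x | ‖x‖ = 1 ∧ 0 ≤ inner ℝ v x}

theorem closedHemisphere_union_neg (v : W) :
    closedHemisphere v ∪ closedHemisphere (-v) = Metric.sphere 0 1 := by
  ext x
  simp only [closedHemisphere, Set.mem_union, Set.mem_ofPred_eq, inner_neg_left, neg_nonneg,
    mem_sphere_zero_iff_norm]
  rcases le_total 0 (inner ℝ v x) with h | h <;> simp +contextual [h]

theorem closedHemisphere_inter_neg (v : W) :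
    closedHemisphere v ∩ closedHemisphere (-v) =
      ((↑) : (ℝ ∙ v)ᗮ → W) '' Metric.sphere 0 1 := by
  ext x
  simp only [closedHemisphere, Set.mem_inter_iff, Set.mem_ofPred_eq, inner_neg_left, neg_nonneg,
    Set.mem_image, mem_sphere_zero_iff_norm, Subtype.exists,
    Submodule.mem_orthogonal_singleton_iff_inner_right]
  constructor
  · rintro ⟨⟨h₁, h₂⟩, -, h₃⟩
    exact ⟨x, le_antisymm h₃ h₂, h₁, rfl⟩
  · rintro ⟨y, hy, hy', rfl⟩
    exact ⟨⟨hy', hy.ge⟩, hy', hy.le⟩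

theorem isConvexCell_closedHemisphere [FiniteDimensional ℝ W] {v : W} (hv : ‖v‖ = 1) :
    IsConvexCell (closedHemisphere v) := by
  let V := (ℝ ∙ v)ᗮ
  let L : V ≃L[ℝ] (Fin (Module.finrank ℝ V) → ℝ) := (Module.finBasis ℝ V).equivFunL
  have hvv : inner ℝ v v = (1 : ℝ) := by rw [real_inner_self_eq_norm_sq, hv, one_pow]
  have hpmem : ∀ x : W, x - inner ℝ v x • v ∈ V := fun x => by
    rw [Submodule.mem_orthogonal_singleton_iff_inner_right, inner_sub_right, inner_smul_right, hvv]
    ring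
  have hVv : ∀ y : V, inner ℝ v (y : W) = (0 : ℝ) := fun y =>
    Submodule.mem_orthogonal_singleton_iff_inner_right.1 y.2
  have hnorm : ∀ (y : V) (t : ℝ), ‖(y : W) + t • v‖ ^ 2 = ‖y‖ ^ 2 + t ^ 2 := fun y t => by
    rw [norm_add_sq_real, inner_smul_right, real_inner_comm, hVv, norm_smul, hv]
    simp
  let φ : (Fin (Module.finrank ℝ V) → ℝ) → W := fun y =>
    (L.symm y : W) + Real.sqrt (1 - ‖L.symm y‖ ^ 2) • v
  let ψ : W → (Fin (Module.finrank ℝ V) → ℝ) := fun x => L ⟨x - inner ℝ v x • v, hpmem x⟩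
  have hinv : ∀ y, ψ (φ y) = y := fun y => by
    have : (⟨φ y - inner ℝ v (φ y) • v, hpmem _⟩ : V) = L.symm y := by
      apply Subtype.ext
      simp only [φ, inner_add_right, inner_smul_right, hvv, hVv]
      simp
    simp only [ψ, this, ContinuousLinearEquiv.apply_symm_apply]
  refine ⟨_, L.symm ⁻¹' Metric.closedBall 0 1, φ, ψ, ⟨0, by simp⟩, ?_, ?_, ?_, ?_, ?_, ?_⟩
  · exact L.symm.toHomeomorph.isCompact_preimage.2 (isCompact_closedBall 0 1)
  · exact (convex_closedBall (0 : V) 1).linear_preimage L.symm.toLinearMap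
  · exact Continuous.continuousOn (by fun_prop)
  · refine Continuous.continuousOn (L.continuous.comp (Continuous.subtype_mk ?_ _))
    fun_prop
  · exact fun y _ => hinv y
  · ext x
    constructor
    · rintro ⟨y, hy, rfl⟩
      have hy' : ‖L.symm y‖ ≤ 1 := by simpa using hy
      have hnn : 0 ≤ 1 - ‖L.symm y‖ ^ 2 := by nlinarith [norm_nonneg (L.symm y)]
      constructor
      · have := hnorm (L.symm y) (Real.sqrt (1 - ‖L.symm y‖ ^ 2))
        rw [Real.sq_sqrt hnn] at this
        rw [← pow_eq_one_iff_of_nonneg (norm_nonneg _) two_ne_zero]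
        simp only [φ]
        rw [this]
        ring
      · simp only [φ, inner_add_right, inner_smul_right, hvv, hVv]
        simp
    · rintro ⟨hx, hx'⟩
      have h := hnorm ⟨_, hpmem x⟩ (inner ℝ v x)
      simp only [sub_add_cancel, hx, one_pow] at h
      have hsq : 1 - ‖(⟨_, hpmem x⟩ : V)‖ ^ 2 = (inner ℝ v x) ^ 2 := by linarith
      refine ⟨ψ x, ?_, ?_⟩
      · simp only [ψ, Set.mem_preimage, ContinuousLinearEquiv.symm_apply_apply,
          mem_closedBall_zero_iff]
        nlinarith [norm_nonneg (⟨_, hpmem x⟩ : V), sq_nonneg (inner ℝ v x)]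
      · simp only [φ, ψ, ContinuousLinearEquiv.symm_apply_apply, hsq, Real.sqrt_sq hx']
        simp

theorem isPreconnected_closedHemisphere_inter_neg [FiniteDimensional ℝ W]
    (hW : 3 ≤ Module.finrank ℝ W) {v : W} (hv : ‖v‖ = 1) :
    IsPreconnected (closedHemisphere v ∩ closedHemisphere (-v)) := by
  rw [closedHemisphere_inter_neg]
  refine IsPreconnected.image (isPreconnected_sphere ?_ _ _) _ continuous_subtype_val.continuousOn
  have hv0 : v ≠ 0 := by rintro rfl; simp at hv
  have := (ℝ ∙ v).finrank_add_finrank_orthogonal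
  rw [finrank_span_singleton hv0] at this
  rw [← Module.finrank_eq_rank]
  exact_mod_cast (by omega : 1 < Module.finrank ℝ (ℝ ∙ v)ᗮ)

theorem hasContinuousLog_sphere [FiniteDimensional ℝ W] (hW : 3 ≤ Module.finrank ℝ W) :
    HasContinuousLog (Metric.sphere (0 : W) 1) := by
  have : Nontrivial W := Module.nontrivial_of_finrank_pos (R := ℝ) (by omega)
  obtain ⟨v, hv⟩ := exists_norm_eq W (zero_le_one (α := ℝ))
  rw [← closedHemisphere_union_neg v]
  have h₁ := isConvexCell_closedHemisphere hv
  have h₂ := isConvexCell_closedHemisphere ((norm_neg v).trans hv)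
  exact h₁.hasContinuousLog.union h₂.hasContinuousLog h₁.isCompact.isClosed h₂.isCompact.isClosed
    (isPreconnected_closedHemisphere_inter_neg hW hv)

theorem hasContinuousLog_closedHemisphere_inter_neg [FiniteDimensional ℝ W]
    (hW : 4 ≤ Module.finrank ℝ W) {v : W} (hv : ‖v‖ = 1) :
    HasContinuousLog (closedHemisphere v ∩ closedHemisphere (-v)) := by
  have hv0 : v ≠ 0 := by rintro rfl; simp at hv
  have := (ℝ ∙ v).finrank_add_finrank_orthogonal
  rw [finrank_span_singleton hv0] at this
  rw [closedHemisphere_inter_neg]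
  refine (hasContinuousLog_sphere (W := (ℝ ∙ v)ᗮ) (by omega)).of_rightInverse
    (ψ := (ℝ ∙ v)ᗮ.orthogonalProjectionOnto) continuous_subtype_val.continuousOn
    (Set.mapsTo_image _ _) (ContinuousLinearMap.continuous _).continuousOn ?_ ?_
  · rintro _ ⟨y, hy, rfl⟩
    simpa using hy
  · rintro _ ⟨y, hy, rfl⟩
    simp

theorem exists_isConvexCell_cover_of_homeomorph_sphere [FiniteDimensional ℝ W]
    (hW : 4 ≤ Module.finrank ℝ W) {B : Type*} [TopologicalSpace B]
    (h : B ≃ₜ Metric.sphere (0 : W) 1) :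
    ∃ A C : Set B, IsConvexCell A ∧ IsConvexCell C ∧ A ∪ C = Set.univ ∧
      IsPreconnected (A ∩ C) ∧ HasContinuousLog (A ∩ C) := by
  classical
  have : Nontrivial W := Module.nontrivial_of_finrank_pos (R := ℝ) (by omega)
  obtain ⟨v, hv⟩ := exists_norm_eq W (zero_le_one (α := ℝ))
  have hS : v ∈ Metric.sphere (0 : W) 1 := by simpa using hv
  let k : B → W := fun b => h b
  let j : W → B := fun x => if hx : x ∈ Metric.sphere (0 : W) 1 then h.symm ⟨x, hx⟩
    else h.symm ⟨v, hS⟩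
  have hk : Continuous k := by fun_prop
  have hj : ContinuousOn j (Metric.sphere 0 1) := by
    rw [continuousOn_iff_continuous_domRestrict]
    have : (Metric.sphere (0 : W) 1).domRestrict j = h.symm := by
      ext x
      simp only [Set.domRestrict, j, x.2, dif_pos]
    rw [this]
    exact h.symm.continuous
  have hkj : Set.LeftInvOn k j (Metric.sphere 0 1) := fun x hx => by
    simp only [k, j, hx, dif_pos, Homeomorph.apply_symm_apply]
  have hjk : ∀ b, j (k b) = b := fun b => by
    simp only [k, j, (h b).2, dif_pos]
    exact h.symm_apply_apply b
  have hsub := closedHemisphere_union_neg v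
  have hsub₁ : closedHemisphere v ⊆ Metric.sphere 0 1 := hsub ▸ Set.subset_union_left
  have hsub₂ : closedHemisphere (-v) ⊆ Metric.sphere 0 1 := hsub ▸ Set.subset_union_right
  have hinter : j '' closedHemisphere v ∩ j '' closedHemisphere (-v) =
      j '' (closedHemisphere v ∩ closedHemisphere (-v)) :=
    (hkj.injOn.image_inter hsub₁ hsub₂).symm
  refine ⟨j '' closedHemisphere v, j '' closedHemisphere (-v),
    (isConvexCell_closedHemisphere hv).image (hj.mono hsub₁) hk.continuousOn (hkj.mono hsub₁),
    (isConvexCell_closedHemisphere ((norm_neg v).trans hv)).image (hj.mono hsub₂) hk.continuousOn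
      (hkj.mono hsub₂), ?_, ?_, ?_⟩
  · rw [← Set.image_union, hsub]
    exact Set.eq_univ_of_forall fun b => ⟨k b, (h b).2, hjk b⟩
  · rw [hinter]
    exact (isPreconnected_closedHemisphere_inter_neg (by omega) hv).image _
      (hj.mono (Set.inter_subset_left.trans hsub₁))
  · rw [hinter]
    refine (hasContinuousLog_closedHemisphere_inter_neg hW hv).of_rightInverse
      (hj.mono (Set.inter_subset_left.trans hsub₁)) (Set.mapsTo_image _ _) hk.continuousOn ?_
      fun b _ => hjk b
    rintro _ ⟨x, hx, rfl⟩
    rwa [hkj (hsub₁ hx.1)]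

end Sphere

section Frame

open scoped Topology Matrix

variable {ι B : Type*} [TopologicalSpace B] {E : B → Type*} [∀ x, AddCommGroup (E x)]
  [∀ x, Module ℝ (E x)] [TopologicalSpace (TotalSpace (EuclideanSpace ℝ ι) E)]

/-- The sections `f i` are continuous and linearly independent at every point of `K`. -/
structure IsContinuousFrameOn (f : ι → ∀ x, E x) (K : Set B) : Prop where
  continuousOn : ∀ i, ContinuousOn (fun x => (⟨x, f i x⟩ : TotalSpace (EuclideanSpace ℝ ι) E)) K
  linearIndependent : ∀ x ∈ K, LinearIndependent ℝ fun i => f i x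

theorem IsContinuousFrameOn.mono {f : ι → ∀ x, E x} {K : Set B}
    (hf : IsContinuousFrameOn f K) {K' : Set B} (h : K' ⊆ K) :
    IsContinuousFrameOn f K' :=
  ⟨fun i => (hf.continuousOn i).mono h, fun x hx => hf.linearIndependent x (h hx)⟩

variable [Fintype ι] [∀ x, TopologicalSpace (E x)] [FiberBundle (EuclideanSpace ℝ ι) E]
  [VectorBundle ℝ (EuclideanSpace ℝ ι) E]

theorem continuousOn_totalSpace_sum_smul {Y κ : Type*} [Fintype κ] [TopologicalSpace Y] {q : Y → B}
    {σ : κ → ∀ y, E (q y)} {c : κ → Y → ℝ} {S : Set Y} (hq : ContinuousOn q S)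
    (hσ : ∀ i, ContinuousOn (fun y => (⟨q y, σ i y⟩ : TotalSpace (EuclideanSpace ℝ ι) E)) S)
    (hc : ∀ i, ContinuousOn (c i) S) :
    ContinuousOn
      (fun y => (⟨q y, ∑ i, c i y • σ i y⟩ : TotalSpace (EuclideanSpace ℝ ι) E)) S := by
  intro y₀ hy₀
  rw [FiberBundle.continuousWithinAt_totalSpace]
  refine ⟨hq y₀ hy₀, ?_⟩
  let e := trivializationAt (EuclideanSpace ℝ ι) E (q y₀)
  have he : ∀ᶠ y in 𝓝[S] y₀, q y ∈ e.baseSet := hq y₀ hy₀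
    (e.open_baseSet.mem_nhds (FiberBundle.mem_baseSet_trivializationAt _ _ _))
  have hlin : ∀ y, q y ∈ e.baseSet →
      (e ⟨q y, ∑ i, c i y • σ i y⟩).2 = ∑ i, c i y • (e ⟨q y, σ i y⟩).2 := fun y hy => by
    have h := map_sum (IsLinearMap.mk' _ (e.linear ℝ hy)) (fun i => c i y • σ i y) Finset.univ
    simp only [map_smul] at h
    exact h
  refine ContinuousWithinAt.congr_of_eventuallyEq (f := fun y => ∑ i, c i y • (e ⟨q y, σ i y⟩).2) ?_
    (he.mono fun y hy => hlin y hy) (hlin y₀ (FiberBundle.mem_baseSet_trivializationAt _ _ _))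
  refine tendsto_finsetSum _ fun i _ => ?_
  have h := ((FiberBundle.continuousWithinAt_totalSpace _ _).1 (hσ i y₀ hy₀)).2
  exact (hc i y₀ hy₀).smul h

namespace IsContinuousFrameOn

variable {f : ι → ∀ x, E x} {K : Set B}

theorem exists_sum_smul_eq (hf : IsContinuousFrameOn f K) {x : B} (hx : x ∈ K) (v : E x) :
    ∃ c : ι → ℝ, ∑ i, c i • f i x = v := by
  let e := trivializationAt (EuclideanSpace ℝ ι) E x
  let L := e.linearEquivAt ℝ x (FiberBundle.mem_baseSet_trivializationAt _ _ _)
  have : FiniteDimensional ℝ (E x) := L.symm.finiteDimensional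
  have hcard : Fintype.card ι = Module.finrank ℝ (E x) := by
    rw [L.finrank_eq, finrank_euclideanSpace]
  have h := (hf.linearIndependent x hx).span_eq_top_of_card_eq_finrank' hcard
  exact Submodule.mem_span_range_iff_exists_fun ℝ |>.1 (h ▸ Submodule.mem_top)

theorem continuousOn_coefficients (hf : IsContinuousFrameOn f K)
    {c : TotalSpace (EuclideanSpace ℝ ι) E → ι → ℝ}
    (hc : ∀ p, p.proj ∈ K → ∑ i, c p i • f i p.proj = p.2) :
    ContinuousOn c (TotalSpace.proj ⁻¹' K) := by
  classical
  intro p₀ hp₀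
  let e := trivializationAt (EuclideanSpace ℝ ι) E p₀.proj
  have hmem := FiberBundle.mem_baseSet_trivializationAt (EuclideanSpace ℝ ι) E p₀.proj
  let M : TotalSpace (EuclideanSpace ℝ ι) E → Matrix ι ι ℝ := fun p =>
    Matrix.of fun i j => (e ⟨p.proj, f i p.proj⟩).2 j
  have hdet : ∀ p, p.proj ∈ K → p.proj ∈ e.baseSet → IsUnit (M p) := by
    intro p hpK hpe
    rw [← Matrix.linearIndependent_rows_iff_isUnit]
    have h := (hf.linearIndependent _ hpK).map' ((e.linearEquivAt ℝ p.proj hpe).trans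
      (EuclideanSpace.equiv ι ℝ).toLinearEquiv).toLinearMap (LinearEquiv.ker _)
    exact h
  have hcM : ∀ p, p.proj ∈ K → p.proj ∈ e.baseSet → (e p).2.ofLp ᵥ* (M p)⁻¹ = c p := by
    intro p hpK hpe
    have h : (e p).2.ofLp = c p ᵥ* M p := by
      have h := map_sum (IsLinearMap.mk' _ (e.linear ℝ hpe)) (fun i => c p i • f i p.proj)
        Finset.univ
      rw [hc p hpK] at h
      simp only [map_smul] at h
      have h' : (e p).2 = ∑ i, c p i • (e ⟨p.proj, f i p.proj⟩).2 := h
      ext j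
      simp [h', Matrix.vecMul, dotProduct, M]
    rw [h, Matrix.vecMul_vecMul, Matrix.mul_nonsing_inv _ ((Matrix.isUnit_iff_isUnit_det _).1
      (hdet p hpK hpe)), Matrix.vecMul_one]
  have hproj : ContinuousWithinAt (TotalSpace.proj : TotalSpace (EuclideanSpace ℝ ι) E → B)
      (TotalSpace.proj ⁻¹' K) p₀ :=
    (FiberBundle.continuous_proj (EuclideanSpace ℝ ι) E).continuousWithinAt
  have he : ∀ᶠ p in 𝓝[TotalSpace.proj ⁻¹' K] p₀, p.proj ∈ e.baseSet :=
    hproj (e.open_baseSet.mem_nhds hmem)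
  have hM : ContinuousWithinAt M (TotalSpace.proj ⁻¹' K) p₀ := by
    refine continuousWithinAt_pi.2 fun i => continuousWithinAt_pi.2 fun j => ?_
    have h := ((FiberBundle.continuousWithinAt_totalSpace _ _).1 (hf.continuousOn i p₀.proj hp₀)).2
    have h' := h.comp hproj (Set.mapsTo_preimage _ _)
    exact ((EuclideanSpace.proj j : EuclideanSpace ℝ ι →L[ℝ] ℝ).continuous.continuousAt
      |>.comp_continuousWithinAt h')
  have hMinv : ContinuousWithinAt (fun p => (M p)⁻¹) (TotalSpace.proj ⁻¹' K) p₀ := by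
    have hd : (M p₀).det ≠ 0 := ((Matrix.isUnit_iff_isUnit_det _).1 (hdet p₀ hp₀ hmem)).ne_zero
    have hinv : ContinuousAt (fun A : Matrix ι ι ℝ => A⁻¹) (M p₀) := by
      simp only [Matrix.inv_def, Ring.inverse_eq_inv']
      exact (continuous_id.matrix_det.continuousAt.inv₀ hd).smul
        continuous_id.matrix_adjugate.continuousAt
    exact hinv.comp_continuousWithinAt hM
  have he₂ : ContinuousWithinAt (fun p => (e p).2.ofLp) (TotalSpace.proj ⁻¹' K) p₀ := by
    have h := ((FiberBundle.continuousWithinAt_totalSpace _ _).1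
      (continuousWithinAt_id (s := TotalSpace.proj ⁻¹' K) (x := p₀))).2
    exact (PiLp.continuous_ofLp 2 _).continuousAt.comp_continuousWithinAt h
  have hmul : ContinuousWithinAt (fun p => (e p).2.ofLp ᵥ* (M p)⁻¹) (TotalSpace.proj ⁻¹' K) p₀ :=
    (Continuous.matrix_vecMul continuous_fst continuous_snd).continuousAt.comp_continuousWithinAt
      (he₂.prodMk hMinv)
  refine hmul.congr_of_eventuallyEq ?_ (hcM p₀ hp₀ hmem).symm
  filter_upwards [he, self_mem_nhdsWithin] with p hp hpK
  exact (hcM p hpK hp).symm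

theorem exists_coefficients (hf : IsContinuousFrameOn f K) :
    ∃ c : TotalSpace (EuclideanSpace ℝ ι) E → ι → ℝ, ContinuousOn c (TotalSpace.proj ⁻¹' K) ∧
      ∀ p, p.proj ∈ K → ∑ i, c p i • f i p.proj = p.2 := by
  have : ∀ p : TotalSpace (EuclideanSpace ℝ ι) E, ∃ c : ι → ℝ,
      p.proj ∈ K → ∑ i, c i • f i p.proj = p.2 := fun p => by
    by_cases hp : p.proj ∈ K
    · exact (hf.exists_sum_smul_eq hp p.2).imp fun c hc _ => hc
    · exact ⟨0, fun h => absurd h hp⟩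
  choose c hc using this
  exact ⟨c, hf.continuousOn_coefficients hc, hc⟩

theorem exists_section_coefficients (hf : IsContinuousFrameOn f K) {σ : ∀ x, E x}
    (hσ : ContinuousOn (fun x => (⟨x, σ x⟩ : TotalSpace (EuclideanSpace ℝ ι) E)) K) :
    ∃ c : ι → B → ℝ, (∀ i, ContinuousOn (c i) K) ∧ ∀ x ∈ K, ∑ i, c i x • f i x = σ x := by
  obtain ⟨c, hc, hcf⟩ := hf.exists_coefficients
  exact ⟨fun i x => c ⟨x, σ x⟩ i, fun i => (continuous_apply i).comp_continuousOn
    (hc.comp hσ fun _ hx => hx), fun x hx => hcf ⟨x, σ x⟩ hx⟩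

/-- A global continuous frame yields a linear trivialization over the whole base. -/
theorem exists_trivialization (hf : IsContinuousFrameOn f Set.univ) :
    ∃ e : Trivialization (EuclideanSpace ℝ ι)
        (TotalSpace.proj (F := EuclideanSpace ℝ ι) (E := E)),
      e.baseSet = Set.univ ∧ e.IsLinear ℝ := by
  obtain ⟨c, hc, hcf⟩ := hf.exists_coefficients
  replace hcf : ∀ p : TotalSpace (EuclideanSpace ℝ ι) E, ∑ i, c p i • f i p.proj = p.2 :=
    fun p => hcf p trivial
  have huniq : ∀ (x : B) (v : ι → ℝ), c ⟨x, ∑ i, v i • f i x⟩ = v := fun x v => by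
    have h := Fintype.linearIndependent_iff.1 (hf.linearIndependent x trivial)
      (fun i => c ⟨x, ∑ i, v i • f i x⟩ i - v i)
    simp only [sub_smul, Finset.sum_sub_distrib] at h
    exact funext fun i => sub_eq_zero.1 (h (sub_eq_zero.2 (hcf ⟨x, _⟩)) i)
  have hcont : Continuous c := by
    rw [← continuousOn_univ]
    exact hc.mono fun _ _ => trivial
  have hinv : Continuous fun y : B × EuclideanSpace ℝ ι =>
      (⟨y.1, ∑ i, y.2 i • f i y.1⟩ : TotalSpace (EuclideanSpace ℝ ι) E) := by
    rw [← continuousOn_univ]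
    refine continuousOn_totalSpace_sum_smul (q := Prod.fst) (σ := fun i y => f i y.1)
      (c := fun i (y : B × EuclideanSpace ℝ ι) => y.2 i) continuous_fst.continuousOn
      (fun i => ?_) fun i => ?_
    · exact (hf.continuousOn i).comp continuous_fst.continuousOn fun _ _ => trivial
    · exact Continuous.continuousOn (by fun_prop)
  let e : TotalSpace (EuclideanSpace ℝ ι) E ≃ₜ B × EuclideanSpace ℝ ι :=
    { toFun := fun p => (p.proj, WithLp.toLp 2 (c p))
      invFun := fun y => ⟨y.1, ∑ i, y.2 i • f i y.1⟩
      left_inv := fun p => by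
        have h := hcf p
        exact congrArg (TotalSpace.mk p.proj) h
      right_inv := fun y => by
        simp only [huniq]
      continuous_toFun := (FiberBundle.continuous_proj _ E).prodMk
        ((PiLp.continuous_toLp 2 _).comp hcont)
      continuous_invFun := hinv }
  refine ⟨⟨e.toOpenPartialHomeomorph, Set.univ, isOpen_univ, rfl, by simp, fun _ _ => rfl⟩,
    rfl, ⟨fun x _ => ⟨fun v w => ?_, fun a v => ?_⟩⟩⟩
  · change WithLp.toLp 2 (c ⟨x, v + w⟩) = WithLp.toLp 2 (c ⟨x, v⟩) + WithLp.toLp 2 (c ⟨x, w⟩)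
    rw [← WithLp.toLp_add, ← huniq x (c ⟨x, v⟩ + c ⟨x, w⟩)]
    simp only [Pi.add_apply, add_smul, Finset.sum_add_distrib]
    rw [hcf ⟨x, v⟩, hcf ⟨x, w⟩]
  · change WithLp.toLp 2 (c ⟨x, a • v⟩) = a • WithLp.toLp 2 (c ⟨x, v⟩)
    rw [← WithLp.toLp_smul, ← huniq x (a • c ⟨x, v⟩)]
    simp only [Pi.smul_apply, smul_assoc, ← Finset.smul_sum]
    rw [hcf ⟨x, v⟩]

end IsContinuousFrameOn

theorem linearIndependent_vecCons_of_det_ne_zero {V : Type*} [AddCommGroup V] [Module ℝ V]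
    {u v w : V} {p₀ p₁ p₂ q₀ q₁ q₂ : ℝ} (h : LinearIndependent ℝ ![u, v, w])
    (hd : p₁ * q₂ - p₂ * q₁ ≠ 0) :
    LinearIndependent ℝ
      ![u, p₀ • u + p₁ • v + p₂ • w, q₀ • u + q₁ • v + q₂ • w] := by
  rw [Fintype.linearIndependent_iff] at h ⊢
  intro g hg
  simp only [Fin.sum_univ_three, Matrix.cons_val] at hg
  have h' := h ![g 0 + g 1 * p₀ + g 2 * q₀, g 1 * p₁ + g 2 * q₁, g 1 * p₂ + g 2 * q₂] (by
    simp only [Fin.sum_univ_three, Matrix.cons_val]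
    rw [← hg]
    module)
  have h₀ : g 0 + g 1 * p₀ + g 2 * q₀ = 0 := h' 0
  have h₁ : g 1 * p₁ + g 2 * q₁ = 0 := h' 1
  have h₂ : g 1 * p₂ + g 2 * q₂ = 0 := h' 2
  have hg₁ : g 1 = 0 := (mul_eq_zero.1 (show g 1 * (p₁ * q₂ - p₂ * q₁) = 0 by
    linear_combination q₂ * h₁ - q₁ * h₂)).resolve_right hd
  have hg₂ : g 2 = 0 := (mul_eq_zero.1 (show g 2 * (p₁ * q₂ - p₂ * q₁) = 0 by
    linear_combination p₁ * h₂ - p₂ * h₁)).resolve_right hd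
  have hg₀ : g 0 = 0 := by simpa [hg₁, hg₂] using h₀
  intro i
  fin_cases i <;> assumption

theorem det_ne_zero_of_linearIndependent_vecCons {V : Type*} [AddCommGroup V] [Module ℝ V]
    {u v w : V} {p₀ p₁ p₂ q₀ q₁ q₂ : ℝ}
    (h : LinearIndependent ℝ
      ![u, p₀ • u + p₁ • v + p₂ • w, q₀ • u + q₁ • v + q₂ • w]) :
    p₁ * q₂ - p₂ * q₁ ≠ 0 := by
  intro hd
  rw [Fintype.linearIndependent_iff] at h
  have h₁ := h ![-(q₂ * p₀ - p₂ * q₀), q₂, -p₂] (by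
    simp only [Fin.sum_univ_three, Matrix.cons_val]
    rw [← zero_smul ℝ v, ← hd]
    module)
  have h₂ := h ![-(p₁ * q₀ - q₁ * p₀), -q₁, p₁] (by
    simp only [Fin.sum_univ_three, Matrix.cons_val]
    rw [← zero_smul ℝ w, ← hd]
    module)
  have hp₂ : -p₂ = 0 := h₁ 2
  have hp₁ : p₁ = 0 := h₂ 2
  have h₃ := h ![-p₀, 1, 0] (by
    simp only [Fin.sum_univ_three, Matrix.cons_val, hp₁, neg_eq_zero.1 hp₂]
    module)
  exact one_ne_zero (h₃ 1)

theorem ContinuousOn.exists_continuous_eqOn.{u, v} {X : Type u} {Y : Type v} [TopologicalSpace X]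
    [NormalSpace X] [TopologicalSpace Y] [TietzeExtension.{u, v} Y] {K : Set X} (hK : IsClosed K) {f : X → Y}
    (hf : ContinuousOn f K) : ∃ g : X → Y, Continuous g ∧ Set.EqOn g f K := by
  obtain ⟨g, hg⟩ := ContinuousMap.exists_restrict_eq hK ⟨_, hf.domRestrict⟩
  exact ⟨g, g.continuous, fun x hx => DFunLike.congr_fun hg ⟨x, hx⟩⟩

/-- A continuous family of positively oriented pairs of vectors in the plane extends from a closed
set on which logarithms exist to the whole space. -/
theorem HasContinuousLog.exists_extension_of_det_pos {X : Type*} [TopologicalSpace X]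
    [NormalSpace X] {K : Set X} (hlog : HasContinuousLog K) (hK : IsClosed K) {p₁ p₂ q₁ q₂ : X → ℝ}
    (hp₁ : ContinuousOn p₁ K) (hp₂ : ContinuousOn p₂ K) (hq₁ : ContinuousOn q₁ K)
    (hq₂ : ContinuousOn q₂ K) (hd : ∀ x ∈ K, 0 < p₁ x * q₂ x - p₂ x * q₁ x) :
    ∃ P₁ P₂ Q₁ Q₂ : X → ℝ, Continuous P₁ ∧ Continuous P₂ ∧ Continuous Q₁ ∧ Continuous Q₂ ∧
      Set.EqOn P₁ p₁ K ∧ Set.EqOn P₂ p₂ K ∧ Set.EqOn Q₁ q₁ K ∧ Set.EqOn Q₂ q₂ K ∧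
      ∀ x, P₁ x * Q₂ x - P₂ x * Q₁ x ≠ 0 := by
  have hN : ∀ x ∈ K, 0 < p₁ x ^ 2 + p₂ x ^ 2 := by
    intro x hx
    by_contra h
    have h₁ : p₁ x = 0 := by nlinarith [sq_nonneg (p₁ x), sq_nonneg (p₂ x)]
    have h₂ : p₂ x = 0 := by nlinarith [sq_nonneg (p₁ x), sq_nonneg (p₂ x)]
    simpa [h₁, h₂] using hd x hx
  obtain ⟨g, hg, hgp⟩ := hlog (fun x => ⟨p₁ x, p₂ x⟩)
    (by
      simp only [Complex.mk_eq_add_mul_I]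
      fun_prop)
    fun x hx h => by
      have h₁ : p₁ x = 0 := congrArg Complex.re h
      have h₂ : p₂ x = 0 := congrArg Complex.im h
      simpa [h₁, h₂] using hN x hx
  obtain ⟨G, hG, hGg⟩ := hg.exists_continuous_eqOn hK
  have hNc : ContinuousOn (fun x => p₁ x ^ 2 + p₂ x ^ 2) K := by fun_prop
  obtain ⟨α, hα, hαp⟩ := ContinuousOn.exists_continuous_eqOn hK
    (f := fun x => (p₁ x * q₁ x + p₂ x * q₂ x) / (p₁ x ^ 2 + p₂ x ^ 2))
    (ContinuousOn.div (by fun_prop) hNc fun x hx => (hN x hx).ne')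
  obtain ⟨β, hβ, hβp⟩ := ContinuousOn.exists_continuous_eqOn hK
    (f := fun x => Real.log ((p₁ x * q₂ x - p₂ x * q₁ x) / (p₁ x ^ 2 + p₂ x ^ 2)))
    (ContinuousOn.log (ContinuousOn.div (by fun_prop) hNc fun x hx => (hN x hx).ne')
      fun x hx => (div_pos (hd x hx) (hN x hx)).ne')
  have hexp : ∀ x ∈ K, Complex.exp (G x) = ⟨p₁ x, p₂ x⟩ := fun x hx => by rw [hGg hx, hgp x hx]
  have hβ' : ∀ x ∈ K, Real.exp (β x) = (p₁ x * q₂ x - p₂ x * q₁ x) / (p₁ x ^ 2 + p₂ x ^ 2) :=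
    fun x hx => by rw [hβp hx, Real.exp_log (div_pos (hd x hx) (hN x hx))]
  refine ⟨fun x => (Complex.exp (G x)).re, fun x => (Complex.exp (G x)).im,
    fun x => α x * (Complex.exp (G x)).re - Real.exp (β x) * (Complex.exp (G x)).im,
    fun x => α x * (Complex.exp (G x)).im + Real.exp (β x) * (Complex.exp (G x)).re,
    by fun_prop, by fun_prop, by fun_prop, by fun_prop, fun x hx => ?_, fun x hx => ?_,
    fun x hx => ?_, fun x hx => ?_, fun x => ?_⟩
  · simp only [hexp x hx]
  · simp only [hexp x hx]
  · simp only [hexp x hx, hβ' x hx, hαp hx]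
    have := (hN x hx).ne'
    field_simp
    ring
  · simp only [hexp x hx, hβ' x hx, hαp hx]
    have := (hN x hx).ne'
    field_simp
    ring
  · have h : (Complex.exp (G x)).re ^ 2 + (Complex.exp (G x)).im ^ 2 ≠ 0 := by
      have := Complex.normSq_pos.2 (Complex.exp_ne_zero (G x))
      rw [Complex.normSq_apply] at this
      nlinarith
    have h' := mul_ne_zero (Real.exp_ne_zero (β x)) h
    intro h''
    exact h' (by rw [← h'']; ring)

/-- A nowhere-zero continuous function on a preconnected set has constant sign. -/
theorem IsPreconnected.forall_pos_or_forall_neg {X : Type*} [TopologicalSpace X] {K : Set X}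
    (hK : IsPreconnected K) {d : X → ℝ} (hd : ContinuousOn d K) (h : ∀ x ∈ K, d x ≠ 0) :
    (∀ x ∈ K, 0 < d x) ∨ ∀ x ∈ K, d x < 0 := by
  by_contra! hcon
  obtain ⟨⟨x, hx, hx'⟩, y, hy, hy'⟩ := hcon
  obtain ⟨z, hz, hz'⟩ := hK.intermediate_value hx hy hd ⟨hx', hy'⟩
  exact h z hz hz'

section Rank3

variable {B : Type*} [TopologicalSpace B] {E : B → Type*} [∀ x, AddCommGroup (E x)]
  [∀ x, Module ℝ (E x)] [TopologicalSpace (TotalSpace (EuclideanSpace ℝ (Fin 3)) E)]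

/-- The section `s` is the first member of a continuous frame on `K`. -/
def ExtendsToFrameOn (s : ∀ x, E x) (K : Set B) : Prop :=
  ∃ a b : ∀ x, E x, IsContinuousFrameOn ![s, a, b] K

theorem isContinuousFrameOn_vecCons_iff {s a b : ∀ x, E x} {K : Set B} :
    IsContinuousFrameOn ![s, a, b] K ↔
      ContinuousOn (fun x => (⟨x, s x⟩ : TotalSpace (EuclideanSpace ℝ (Fin 3)) E)) K ∧
      ContinuousOn (fun x => (⟨x, a x⟩ : TotalSpace (EuclideanSpace ℝ (Fin 3)) E)) K ∧
      ContinuousOn (fun x => (⟨x, b x⟩ : TotalSpace (EuclideanSpace ℝ (Fin 3)) E)) K ∧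
      ∀ x ∈ K, LinearIndependent ℝ ![s x, a x, b x] := by
  have hvec : ∀ x, (fun i => ![s, a, b] i x) = ![s x, a x, b x] := fun x => by
    ext i
    fin_cases i <;> rfl
  constructor
  · intro h
    exact ⟨h.continuousOn 0, h.continuousOn 1, h.continuousOn 2,
      fun x hx => hvec x ▸ h.linearIndependent x hx⟩
  · rintro ⟨hs, ha, hb, h⟩
    refine ⟨fun i => ?_, fun x hx => (hvec x).symm ▸ h x hx⟩
    fin_cases i <;> assumption

theorem ExtendsToFrameOn.mono {s : ∀ x, E x} {K K' : Set B} (h : ExtendsToFrameOn s K)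
    (hK : K' ⊆ K) : ExtendsToFrameOn s K' := by
  obtain ⟨a, b, hf⟩ := h
  exact ⟨a, b, hf.mono hK⟩

variable [∀ x, TopologicalSpace (E x)] [FiberBundle (EuclideanSpace ℝ (Fin 3)) E]
  [VectorBundle ℝ (EuclideanSpace ℝ (Fin 3)) E] {s : ∀ x, E x}

theorem exists_mem_nhds_extendsToFrameOn
    (hs : Continuous fun x => (⟨x, s x⟩ : TotalSpace (EuclideanSpace ℝ (Fin 3)) E))
    (hnz : ∀ x, s x ≠ 0) (x₀ : B) : ∃ U ∈ nhds x₀, ExtendsToFrameOn s U := by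
  let e := trivializationAt (EuclideanSpace ℝ (Fin 3)) E x₀
  have hmem : x₀ ∈ e.baseSet := FiberBundle.mem_baseSet_trivializationAt _ _ _
  have hs₀ : (e ⟨x₀, s x₀⟩).2 ≠ 0 :=
    (LinearEquiv.map_ne_zero_iff (e.linearEquivAt ℝ x₀ hmem)).2 (hnz x₀)
  obtain ⟨v, hv⟩ := exists_linearIndependent_snoc_of_lt_finrank
    (LinearIndependent.of_subsingleton (ι := Fin 1) (R := ℝ) (v := ![(e ⟨x₀, s x₀⟩).2]) 0 hs₀)
    (by simp)
  obtain ⟨w, hw⟩ := exists_linearIndependent_snoc_of_lt_finrank hv (by simp)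
  have hsnoc : (Fin.snoc (Fin.snoc ![(e ⟨x₀, s x₀⟩).2] v) w : Fin 3 → EuclideanSpace ℝ (Fin 3)) =
      ![(e ⟨x₀, s x₀⟩).2, v, w] := by
    ext i : 1
    fin_cases i <;> rfl
  rw [hsnoc] at hw
  have hes : ContinuousOn (fun x => (e ⟨x, s x⟩).2) e.baseSet :=
    continuous_snd.comp_continuousOn (e.continuousOn.comp hs.continuousOn fun x hx =>
      e.mem_source.2 hx)
  have hvec : ContinuousAt (fun x => ![(e ⟨x, s x⟩).2, v, w]) x₀ := by
    refine continuousAt_pi.2 fun i => ?_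
    fin_cases i
    · exact hes.continuousAt (e.open_baseSet.mem_nhds hmem)
    · exact continuousAt_const
    · exact continuousAt_const
  refine ⟨_, Filter.inter_mem (hvec hw.eventually) (e.open_baseSet.mem_nhds hmem),
    fun x => e.symm x v, fun x => e.symm x w, ?_⟩
  have hsymm : ∀ u : EuclideanSpace ℝ (Fin 3), ContinuousOn
      (fun x => (⟨x, e.symm x u⟩ : TotalSpace (EuclideanSpace ℝ (Fin 3)) E)) e.baseSet := fun u =>
    e.continuousOn_symm.comp (f := fun x => (x, u)) (by fun_prop) fun x hx => ⟨hx, trivial⟩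
  rw [isContinuousFrameOn_vecCons_iff]
  refine ⟨hs.continuousOn, (hsymm v).mono Set.inter_subset_right,
    (hsymm w).mono Set.inter_subset_right, ?_⟩
  rintro x ⟨hx, hxe⟩
  have hli : LinearIndependent ℝ ![(e ⟨x, s x⟩).2, v, w] := hx
  refine LinearIndependent.of_comp (e.linearEquivAt ℝ x hxe).toLinearMap ?_
  convert hli using 1
  ext i : 1
  fin_cases i
  · rfl
  · exact congrArg Prod.snd (e.apply_mk_symm hxe v)
  · exact congrArg Prod.snd (e.apply_mk_symm hxe w)

theorem ContinuousOn.totalSpace_add_smul {a b : ∀ x, E x} {K : Set B} {c₀ c₁ c₂ : B → ℝ}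
    (hs : ContinuousOn (fun x => (⟨x, s x⟩ : TotalSpace (EuclideanSpace ℝ (Fin 3)) E)) K)
    (ha : ContinuousOn (fun x => (⟨x, a x⟩ : TotalSpace (EuclideanSpace ℝ (Fin 3)) E)) K)
    (hb : ContinuousOn (fun x => (⟨x, b x⟩ : TotalSpace (EuclideanSpace ℝ (Fin 3)) E)) K)
    (h₀ : ContinuousOn c₀ K) (h₁ : ContinuousOn c₁ K) (h₂ : ContinuousOn c₂ K) :
    ContinuousOn (fun x => (⟨x, c₀ x • s x + c₁ x • a x + c₂ x • b x⟩ :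
      TotalSpace (EuclideanSpace ℝ (Fin 3)) E)) K := by
  have h := continuousOn_totalSpace_sum_smul (q := id) (σ := ![s, a, b]) (c := ![c₀, c₁, c₂])
    continuousOn_id (S := K) (fun i => by fin_cases i <;> assumption)
    (fun i => by fin_cases i <;> assumption)
  exact h.congr fun x _ => congrArg (TotalSpace.mk x)
    (Fin.sum_univ_three fun i => ![c₀, c₁, c₂] i x • ![s, a, b] i x).symm

theorem ExtendsToFrameOn.union_of_det_pos [NormalSpace B] {A C : Set B} (hA : IsClosed A)
    (hC : IsClosed C) (hlog : HasContinuousLog (A ∩ C)) {a b a' b' : ∀ x, E x}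
    (hf : IsContinuousFrameOn ![s, a, b] A) (hf' : IsContinuousFrameOn ![s, a', b'] C)
    {p q : Fin 3 → B → ℝ} (hp : ∀ i, ContinuousOn (p i) (A ∩ C))
    (hq : ∀ i, ContinuousOn (q i) (A ∩ C))
    (hpa : ∀ x ∈ A ∩ C, p 0 x • s x + p 1 x • a' x + p 2 x • b' x = a x)
    (hqb : ∀ x ∈ A ∩ C, q 0 x • s x + q 1 x • a' x + q 2 x • b' x = b x)
    (hd : ∀ x ∈ A ∩ C, 0 < p 1 x * q 2 x - p 2 x * q 1 x) : ExtendsToFrameOn s (A ∪ C) := by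
  classical
  rw [isContinuousFrameOn_vecCons_iff] at hf hf'
  obtain ⟨hs, ha, hb, hli⟩ := hf
  obtain ⟨hs', ha', hb', hli'⟩ := hf'
  have hAC := hA.inter hC
  obtain ⟨P₁, P₂, Q₁, Q₂, hP₁, hP₂, hQ₁, hQ₂, hPp₁, hPp₂, hQq₁, hQq₂, hPQ⟩ :=
    hlog.exists_extension_of_det_pos hAC (hp 1) (hp 2) (hq 1) (hq 2) hd
  obtain ⟨P₀, hP₀, hPp₀⟩ := (hp 0).exists_continuous_eqOn hAC
  obtain ⟨Q₀, hQ₀, hQq₀⟩ := (hq 0).exists_continuous_eqOn hAC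
  let a₂ : ∀ x, E x := fun x => if x ∈ A then a x else P₀ x • s x + P₁ x • a' x + P₂ x • b' x
  let b₂ : ∀ x, E x := fun x => if x ∈ A then b x else Q₀ x • s x + Q₁ x • a' x + Q₂ x • b' x
  have ha₂ : ∀ x ∈ A, a₂ x = a x := fun x hx => if_pos hx
  have hb₂ : ∀ x ∈ A, b₂ x = b x := fun x hx => if_pos hx
  have ha₂' : ∀ x ∈ C, a₂ x = P₀ x • s x + P₁ x • a' x + P₂ x • b' x := fun x hx => by
    by_cases hxA : x ∈ A
    · rw [ha₂ x hxA, hPp₀ ⟨hxA, hx⟩, hPp₁ ⟨hxA, hx⟩, hPp₂ ⟨hxA, hx⟩, hpa x ⟨hxA, hx⟩]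
    · exact if_neg hxA
  have hb₂' : ∀ x ∈ C, b₂ x = Q₀ x • s x + Q₁ x • a' x + Q₂ x • b' x := fun x hx => by
    by_cases hxA : x ∈ A
    · rw [hb₂ x hxA, hQq₀ ⟨hxA, hx⟩, hQq₁ ⟨hxA, hx⟩, hQq₂ ⟨hxA, hx⟩, hqb x ⟨hxA, hx⟩]
    · exact if_neg hxA
  refine ⟨a₂, b₂, isContinuousFrameOn_vecCons_iff.2
    ⟨hs.union_of_isClosed hs' hA hC, ?_, ?_, fun x hx => ?_⟩⟩
  · refine ContinuousOn.union_of_isClosed (ha.congr fun x hx => by rw [ha₂ x hx])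
      (ContinuousOn.congr (hs'.totalSpace_add_smul ha' hb' hP₀.continuousOn hP₁.continuousOn
        hP₂.continuousOn) fun x hx => by rw [ha₂' x hx]) hA hC
  · refine ContinuousOn.union_of_isClosed (hb.congr fun x hx => by rw [hb₂ x hx])
      (ContinuousOn.congr (hs'.totalSpace_add_smul ha' hb' hQ₀.continuousOn hQ₁.continuousOn
        hQ₂.continuousOn) fun x hx => by rw [hb₂' x hx]) hA hC
  · rcases hx with hx | hx
    · rw [ha₂ x hx, hb₂ x hx]
      exact hli x hx
    · rw [ha₂' x hx, hb₂' x hx]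
      exact linearIndependent_vecCons_of_det_ne_zero (hli' x hx) (hPQ x)

theorem ExtendsToFrameOn.union [NormalSpace B] {A C : Set B} (hsA : ExtendsToFrameOn s A)
    (hsC : ExtendsToFrameOn s C) (hA : IsClosed A) (hC : IsClosed C)
    (hlog : HasContinuousLog (A ∩ C)) (hconn : IsPreconnected (A ∩ C)) :
    ExtendsToFrameOn s (A ∪ C) := by
  obtain ⟨a, b, hf⟩ := hsA
  obtain ⟨a', b', hf'⟩ := hsC
  have hfAC := hf'.mono (Set.inter_subset_right (s := A))
  obtain ⟨p, hp, hpa⟩ := hfAC.exists_section_coefficients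
    ((hf.continuousOn 1).mono Set.inter_subset_left)
  obtain ⟨q, hq, hqb⟩ := hfAC.exists_section_coefficients
    ((hf.continuousOn 2).mono Set.inter_subset_left)
  replace hpa : ∀ x ∈ A ∩ C, p 0 x • s x + p 1 x • a' x + p 2 x • b' x = a x :=
    fun x hx => (Fin.sum_univ_three _).symm.trans (hpa x hx)
  replace hqb : ∀ x ∈ A ∩ C, q 0 x • s x + q 1 x • a' x + q 2 x • b' x = b x :=
    fun x hx => (Fin.sum_univ_three _).symm.trans (hqb x hx)
  have hd : ∀ x ∈ A ∩ C, p 1 x * q 2 x - p 2 x * q 1 x ≠ 0 := fun x hx => by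
    have h := (isContinuousFrameOn_vecCons_iff.1 hf).2.2.2 x hx.1
    rw [← hpa x hx, ← hqb x hx] at h
    exact det_ne_zero_of_linearIndependent_vecCons h
  have hdc : ContinuousOn (fun x => p 1 x * q 2 x - p 2 x * q 1 x) (A ∩ C) :=
    ((hp 1).mul (hq 2)).sub ((hp 2).mul (hq 1))
  rcases hconn.forall_pos_or_forall_neg hdc hd with hpos | hneg
  · exact union_of_det_pos hA hC hlog hf hf' hp hq hpa hqb hpos
  · have hfneg : IsContinuousFrameOn ![s, a', fun x => -b' x] C := by
      rw [isContinuousFrameOn_vecCons_iff] at hf' ⊢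
      obtain ⟨hs, ha', hb', hli⟩ := hf'
      refine ⟨hs, ha', ?_, fun x hx => ?_⟩
      · simpa using hs.totalSpace_add_smul ha' hb' (c₀ := fun _ => 0) (c₁ := fun _ => 0)
          (c₂ := fun _ => -1) continuousOn_const continuousOn_const continuousOn_const
      · simpa using linearIndependent_vecCons_of_det_ne_zero (p₀ := 0) (p₁ := 1) (p₂ := 0)
          (q₀ := 0) (q₁ := 0) (q₂ := -1) (hli x hx) (by norm_num)
    refine union_of_det_pos hA hC hlog hf hfneg (p := ![p 0, p 1, fun x => -p 2 x])
      (q := ![q 0, q 1, fun x => -q 2 x]) (fun i => ?_) (fun i => ?_) (fun x hx => ?_)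
      (fun x hx => ?_) fun x hx => ?_
    · fin_cases i
      exacts [hp 0, hp 1, (hp 2).neg]
    · fin_cases i
      exacts [hq 0, hq 1, (hq 2).neg]
    · simpa using hpa x hx
    · simpa using hqb x hx
    · have := hneg x hx
      simp only [Matrix.cons_val]
      linarith

theorem IsConvexCell.extendsToFrameOn [T2Space B] [NormalSpace B] {H : Set B} (hH : IsConvexCell H)
    (hs : Continuous fun x => (⟨x, s x⟩ : TotalSpace (EuclideanSpace ℝ (Fin 3)) E))
    (hnz : ∀ x, s x ≠ 0) : ExtendsToFrameOn s H := by
  obtain ⟨n, D, φ, ψ, hne, hDc, hD, hφ, hψ, hinv, rfl⟩ := hH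
  refine Convex.induction_on_slabs hne hDc hD (fun C => ExtendsToFrameOn s (φ '' C)) ?_ ?_
  · intro x hx
    obtain ⟨U, hU, hUs⟩ := exists_mem_nhds_extendsToFrameOn hs hnz (φ x)
    obtain ⟨V, hV, hVU⟩ := mem_nhdsWithin_iff_exists_mem_nhds_inter.1 (hφ x hx hU)
    exact ⟨V, hV, fun C hC => hUs.mono (Set.image_subset_iff.2 (hC.trans hVU))⟩
  · intro C₁ C₂ h₁ h₂ hc₁ hc₂ hv₁ hv₂ hs₁ hs₂
    have hcell : ∀ C ⊆ D, IsClosed C → IsClosed (φ '' C) := fun C hCD hC =>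
      ((hDc.of_isClosed_subset hC hCD).image_of_continuousOn (hφ.mono hCD)).isClosed
    have hsub : C₁ ∩ C₂ ⊆ D := Set.inter_subset_left.trans h₁
    rw [Set.image_union]
    refine hs₁.union hs₂ (hcell _ h₁ hc₁) (hcell _ h₂ hc₂) ?_ ?_
    · rw [← hinv.injOn.image_inter h₁ h₂]
      refine (HasContinuousLog.of_convex (hv₁.inter hv₂)).of_rightInverse (hφ.mono hsub)
        (Set.mapsTo_image _ _) (hψ.mono (Set.image_mono hsub)) ?_ ?_
      · rintro _ ⟨x, hx, rfl⟩
        rwa [hinv (hsub hx)]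
      · rintro _ ⟨x, hx, rfl⟩
        rw [hinv (hsub hx)]
    · rw [← hinv.injOn.image_inter h₁ h₂]
      exact (hv₁.inter hv₂).isPreconnected.image _ (hφ.mono hsub)

end Rank3

end Frame

/-- A rank 3 real vector bundle over the sphere `Sⁿ`, `n ≥ 3`, admitting a
nowhere-zero continuous section is trivial (it admits a linear trivialization over the
whole base). -/
theorem stmt_5 (n : ℕ) (hn : 3 ≤ n)
    {B : Type*} [TopologicalSpace B]
    (hB : Nonempty (B ≃ₜ Metric.sphere (0 : EuclideanSpace ℝ (Fin (n + 1))) 1))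
    (E : B → Type*) [∀ x, AddCommGroup (E x)] [∀ x, Module ℝ (E x)]
    [∀ x, TopologicalSpace (E x)]
    [TopologicalSpace (Bundle.TotalSpace (EuclideanSpace ℝ (Fin 3)) E)]
    [FiberBundle (EuclideanSpace ℝ (Fin 3)) E]
    [VectorBundle ℝ (EuclideanSpace ℝ (Fin 3)) E]
    (s : ∀ x, E x)
    (hs : Continuous fun x => (⟨x, s x⟩ : Bundle.TotalSpace (EuclideanSpace ℝ (Fin 3)) E))
    (hnz : ∀ x, s x ≠ 0) :
    ∃ e : Trivialization (EuclideanSpace ℝ (Fin 3))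
        (Bundle.TotalSpace.proj (F := EuclideanSpace ℝ (Fin 3)) (E := E)),
      e.baseSet = Set.univ ∧ e.IsLinear ℝ := by
  obtain ⟨h⟩ := hB
  have : T2Space B := h.symm.t2Space
  have : CompactSpace B := h.symm.compactSpace
  obtain ⟨A, C, hA, hC, hAC, hconn, hlog⟩ :=
    exists_isConvexCell_cover_of_homeomorph_sphere (by simpa using hn) h
  obtain ⟨a, b, hf⟩ := (hA.extendsToFrameOn hs hnz).union (hC.extendsToFrameOn hs hnz)
    hA.isCompact.isClosed hC.isCompact.isClosed hlog hconn
  rw [hAC] at hf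
  exact hf.exists_trivialization
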